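/- Let A be a nonempty finite subset of a group G₀ and let G be the subgroup of G₀ generated by the set A⁻¹A. Suppose that A⁻¹A is a proper subset of G and that 3|A⁻¹A| < 5|A|. Then there exist a subgroup K of G that is normal in G, and a subgroup H of G with K ⊆ H and (the underlying set of) H contained in A⁻¹A, such that 2|K| ≥ |H|, (A⁻¹A)K = K(A⁻¹A) = A⁻¹A, |A⁻¹A| = 3|H|, and 6|K| ≥ |A⁻¹A|. -/

import Mathlib

open Pointwise

open DoubleCoset (doubleCoset)
open MulOpposite (op)

/-!
Translate `A` so that `1 ∈ A`, put `D = A⁻¹A` and let `G` be the subgroup generated by `D`. As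
`D ≠ G`, Hamidoune's isoperimetric method applies: among the finite nonempty `X ⊆ G` with
`XT ≠ G`, `T ∈ {A, A⁻¹}`, minimise `|XT| - |X|` and then `|X|`. A minimiser containing `1` is a
subgroup `H`, and comparison with `X = A⁻¹` gives `|HT| - |H| ≤ |D| - |A| < 2|A|/3`, so that `T`
lies in `H ∪ Hy` for some `y ∉ H` and `|A| > 3|H|/2`.

Hence `A` consists of more than half of `H` and more than half of a coset `zH` or `Hz`. Counting
representations shows that `D` is all of `H ∪ HzH ∪ Hz⁻¹H` or all of `H ∪ z⁻¹Hz ∪ Hz ∪ z⁻¹H`. As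
`|A| ≤ 2|H|`, it has fewer than `10|H|/3` elements; as it is not a subgroup, the only remaining
possibility is that, for a suitable `z`, `|D| = 3|H|`, the subgroup `K = H ∩ zHz⁻¹` has index at
most two in `H`, and `z²` normalises `H`, so that `z` normalises `K`.
-/

section Isoperimetry

variable {G₀ : Type*} [Group G₀] [DecidableEq G₀] {G : Subgroup G₀} {S X Y : Finset G₀} {g : G₀}

/-- A nonempty finite subset `X` of the subgroup `G` whose product with `S` does not cover `G`:
the sets over which Hamidoune's isoperimetric method minimises the expansion `|X * S| - |X|`. -/
structure IsSeparating (G : Subgroup G₀) (S X : Finset G₀) : Prop where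
  nonempty : X.Nonempty
  subset : (X : Set G₀) ⊆ G
  not_subset : ¬ (G : Set G₀) ⊆ ↑(X * S)

/-- A Hamidoune atom of `S` in `G`: among the separating sets of both `S` and `S⁻¹`, one that has
the least expansion `|X * S| - |X|` and, subject to that, the least cardinality. -/
structure IsHamidouneAtom (G : Subgroup G₀) (S X : Finset G₀) : Prop
    extends IsSeparating G S X where
  expansion_le : ∀ T Y, (T = S ∨ T = S⁻¹) → IsSeparating G T Y →
    (X * S).card + Y.card ≤ X.card + (Y * T).card
  card_le : ∀ T Y, (T = S ∨ T = S⁻¹) → IsSeparating G T Y →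
    (Y * T).card + X.card ≤ Y.card + (X * S).card → X.card ≤ Y.card

theorem IsSeparating.mono (hX : IsSeparating G S X) (hYX : Y ⊆ X) (hY : Y.Nonempty) :
    IsSeparating G S Y where
  nonempty := hY
  subset := (Finset.coe_subset.2 hYX).trans hX.subset
  not_subset h :=
    hX.not_subset (h.trans (Finset.coe_subset.2 (Finset.mul_subset_mul_right hYX)))

theorem IsSeparating.smul (hX : IsSeparating G S X) (hg : g ∈ G) : IsSeparating G S (g • X) where
  nonempty := hX.nonempty.smul_finset
  subset := by
    rw [Finset.coe_smul_finset, Set.smul_set_subset_iff_subset_inv_smul_set,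
      smul_coe_set (G.inv_mem hg)]
    exact hX.subset
  not_subset h := hX.not_subset <| by
    rwa [smul_mul_assoc, Finset.coe_smul_finset, Set.subset_smul_set_iff,
      smul_coe_set (G.inv_mem hg)] at h

theorem IsHamidouneAtom.smul (hX : IsHamidouneAtom G S X) (hg : g ∈ G) :
    IsHamidouneAtom G S (g • X) where
  toIsSeparating := hX.toIsSeparating.smul hg
  expansion_le T Y hT hY := by
    simpa only [smul_mul_assoc, Finset.card_smul_finset] using hX.expansion_le T Y hT hY
  card_le T Y hT hY := by
    simpa only [smul_mul_assoc, Finset.card_smul_finset] using hX.card_le T Y hT hY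

theorem IsSeparating.exists_isHamidouneAtom (hX : IsSeparating G S X) (hS : S.Nonempty) :
    ∃ T Y, (T = S ∨ T = S⁻¹) ∧ IsHamidouneAtom G T Y ∧
      (Y * T).card + X.card ≤ Y.card + (X * S).card := by
  let IsCandidate : Finset G₀ × Finset G₀ → Prop := fun p ↦
    (p.1 = S ∨ p.1 = S⁻¹) ∧ IsSeparating G p.1 p.2
  let cost : Finset G₀ × Finset G₀ → ℕ ×ₗ ℕ := fun p ↦
    toLex ((p.2 * p.1).card - p.2.card, p.2.card)
  obtain ⟨⟨T, Y⟩, ⟨hT, hY⟩, hmin⟩ :=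
    exists_minimalFor_of_wellFoundedLT IsCandidate cost ⟨(S, X), .inl rfl, hX⟩
  have le_card_mul {T Z : Finset G₀} (hT : T = S ∨ T = S⁻¹) : Z.card ≤ (Z * T).card :=
    Finset.card_le_card_mul_right (by rcases hT with rfl | rfl <;> simpa using hS)
  have expansion_lt_or {T' Z : Finset G₀} (hT' : T' = S ∨ T' = S⁻¹) (hZ : IsSeparating G T' Z) :
      (Y * T).card - Y.card < (Z * T').card - Z.card ∨
        (Y * T).card - Y.card = (Z * T').card - Z.card ∧ Y.card ≤ Z.card := by
    have hle : cost (T, Y) ≤ cost (T', Z) :=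
      (le_total (cost (T, Y)) (cost (T', Z))).elim id (hmin ⟨hT', hZ⟩)
    simpa only [cost, Prod.Lex.toLex_le_toLex] using hle
  have swap {T' : Finset G₀} (hT' : T' = T ∨ T' = T⁻¹) : T' = S ∨ T' = S⁻¹ := by
    rcases hT with rfl | rfl <;> simpa [or_comm] using hT'
  refine ⟨T, Y, hT, ⟨hY, fun T' Z hT' hZ ↦ ?_, fun T' Z hT' hZ hle ↦ ?_⟩, ?_⟩
  · grind only [expansion_lt_or (swap hT') hZ, le_card_mul (Z := Z) (swap hT'),
      le_card_mul (Z := Y) hT]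
  · grind only [expansion_lt_or (swap hT') hZ, le_card_mul (Z := Z) (swap hT'),
      le_card_mul (Z := Y) hT]
  · grind only [expansion_lt_or (.inl rfl) hX, le_card_mul (Z := X) (.inl rfl),
      le_card_mul (Z := Y) hT]

theorem IsSeparating.sdiff_mul {E : Finset G₀} (hX : IsSeparating G S X) (hE : (E : Set G₀) = G)
    (hS : (S : Set G₀) ⊆ G) :
    IsSeparating G S⁻¹ (E \ (X * S)) ∧
      ((E \ (X * S)) * S⁻¹).card + X.card ≤ (E \ (X * S)).card + (X * S).card := by
  have hXE : X ⊆ E := by rw [← Finset.coe_subset, hE]; exact hX.subset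
  have hXS : X * S ⊆ E := by
    rw [← Finset.coe_subset, hE, Finset.coe_mul]; exact Subgroup.mul_subset hX.subset hS
  have hmul : (E \ (X * S)) * S⁻¹ ⊆ E \ X := by
    intro a ha
    obtain ⟨b, hb, s, hs, rfl⟩ := Finset.mem_mul.1 ha
    rw [Finset.mem_sdiff, ← Finset.mem_coe, hE] at hb ⊢
    rw [Finset.mem_inv'] at hs
    refine ⟨G.mul_mem hb.1 (G.inv_mem_iff.1 (hS hs)), fun hbs ↦ hb.2 ?_⟩
    simpa using Finset.mul_mem_mul hbs hs
  obtain ⟨x, hx⟩ := hX.nonempty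
  refine ⟨⟨?_, ?_, fun h ↦ ?_⟩, ?_⟩
  · rw [Finset.sdiff_nonempty, ← Finset.coe_subset, hE]
    exact hX.not_subset
  · rw [← hE]; exact Finset.coe_subset.2 Finset.sdiff_subset
  · exact (Finset.mem_sdiff.1 (hmul (h (hX.subset hx)))).2 hx
  · have := Finset.card_le_card hmul
    have := Finset.card_sdiff_add_card_eq_card hXE
    have := Finset.card_sdiff_add_card_eq_card hXS
    lia

/-- By submodularity of the expansion, `X ∩ g • X` again has least expansion, unless
`(X ∪ g • X) * S` covers `G`; in that case `G` is finite and the complement of `X * S` in it is a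
smaller set of least expansion, for `S⁻¹`. -/
theorem IsHamidouneAtom.smul_eq_self (hX : IsHamidouneAtom G S X) (hS : (S : Set G₀) ⊆ G)
    (h1 : 1 ∈ X) (hg : g ∈ X) : g • X = X := by
  have hgX : IsSeparating G S (g • X) := hX.toIsSeparating.smul (hX.subset hg)
  have hcard : (g • X).card = X.card := Finset.card_smul_finset g X
  have hcardS : (g • X * S).card = (X * S).card := by
    rw [smul_mul_assoc, Finset.card_smul_finset]
  have hinter_ne : (X ∩ g • X).Nonempty :=
    ⟨g, Finset.mem_inter.2 ⟨hg, by simpa using Finset.smul_mem_smul_finset (a := g) h1⟩⟩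
  have hinter : IsSeparating G S (X ∩ g • X) := hX.mono Finset.inter_subset_left hinter_ne
  have hinter_le := hX.expansion_le S _ (.inl rfl) hinter
  have hsub : ((X ∩ g • X) * S).card ≤ (X * S ∩ (g • X * S)).card :=
    Finset.card_le_card Finset.inter_mul_subset
  have hX_card := Finset.card_union_add_card_inter X (g • X)
  have hXS_card := Finset.card_union_add_card_inter (X * S) (g • X * S)
  by_cases hcover : (G : Set G₀) ⊆ ↑((X ∪ g • X) * S)
  · have hfin : (G : Set G₀).Finite := (Finset.finite_toSet _).subset hcover
    obtain ⟨hZ, hZ_le⟩ := hX.sdiff_mul hfin.coe_toFinset hS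
    have hZ_card := hX.card_le S⁻¹ _ (.inr rfl) hZ hZ_le
    have hZ_sub : hfin.toFinset \ (X * S) ⊆ (g • X * S) \ (X * S) := by
      intro z hz
      rw [Finset.mem_sdiff, hfin.mem_toFinset] at hz
      have := hcover hz.1
      rw [Finset.mem_coe, Finset.union_mul, Finset.mem_union] at this
      exact Finset.mem_sdiff.2 ⟨this.resolve_left hz.2, hz.2⟩
    have := Finset.card_le_card hZ_sub
    have := Finset.card_sdiff_add_card_inter (g • X * S) (X * S)
    rw [Finset.inter_comm] at this
    have := hinter_ne.card_pos
    lia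
  · have hunion : IsSeparating G S (X ∪ g • X) :=
      ⟨hX.nonempty.mono Finset.subset_union_left,
        by rw [Finset.coe_union]; exact Set.union_subset hX.subset hgX.subset, hcover⟩
    have hunion_le := hX.expansion_le S _ (.inl rfl) hunion
    rw [Finset.union_mul] at hunion_le
    have hle : X.card ≤ (X ∩ g • X).card := hX.card_le S _ (.inl rfl) hinter (by lia)
    have hleft := Finset.eq_of_subset_of_card_le Finset.inter_subset_left hle
    have hright := Finset.eq_of_subset_of_card_le Finset.inter_subset_right (hcard.trans_le hle)
    rw [← hright, hleft]

theorem IsHamidouneAtom.exists_coe_eq (hX : IsHamidouneAtom G S X) (hS : (S : Set G₀) ⊆ G)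
    (h1 : 1 ∈ X) : ∃ H : Subgroup G₀, (H : Set G₀) = X := by
  refine ⟨MulAction.stabilizer G₀ X, Set.ext fun g ↦ ⟨fun hg ↦ ?_, hX.smul_eq_self hS h1⟩⟩
  rw [Finset.mem_coe, ← show g • X = X from hg]
  simpa using Finset.smul_mem_smul_finset (a := g) h1

theorem IsSeparating.exists_subgroup (hX : IsSeparating G S X) (hS : S.Nonempty)
    (hSG : (S : Set G₀) ⊆ G) :
    ∃ (H : Subgroup G₀) (T F : Finset G₀), (H : Set G₀) = F ∧ (T = S ∨ T = S⁻¹) ∧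
      IsSeparating G T F ∧ (F * T).card + X.card ≤ F.card + (X * S).card := by
  obtain ⟨T, Y, hT, hY, hle⟩ := hX.exists_isHamidouneAtom hS
  obtain ⟨y, hy⟩ := hY.nonempty
  have hF := hY.smul (G.inv_mem (hY.subset hy))
  have hTG : (T : Set G₀) ⊆ G := by
    rcases hT with rfl | rfl
    · exact hSG
    · rwa [Finset.coe_inv, Set.inv_subset, inv_coe_set]
  obtain ⟨H, hH⟩ :=
    hF.exists_coe_eq hTG (by simpa using Finset.smul_mem_smul_finset (a := y⁻¹) hy)
  refine ⟨H, T, y⁻¹ • Y, hH, hT, hF.toIsSeparating, ?_⟩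
  rwa [smul_mul_assoc, Finset.card_smul_finset, Finset.card_smul_finset]

end Isoperimetry

section Subgroups

variable {G₀ : Type*} [Group G₀] {H K L : Subgroup G₀} {P Q : Set G₀} {z : G₀}

theorem card_inf_mul_relIndex (H L : Subgroup G₀) :
    Nat.card ↥(H ⊓ L) * L.relIndex H = Nat.card H := by
  rw [← Subgroup.inf_relIndex_left, ← Subgroup.relIndex_bot_left, ← Subgroup.relIndex_bot_left,
    Subgroup.relIndex_mul_relIndex _ _ _ bot_le inf_le_left]

theorem ncard_coe_mul_coe (H L : Subgroup G₀) :
    ((H : Set G₀) * L).ncard = Nat.card L * L.relIndex H := by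
  have smul_one (x : H) : x • ((1 : G₀) : G₀ ⧸ L) = (x : G₀) :=
    congrArg QuotientGroup.mk (mul_one (x : G₀))
  have hstab : MulAction.stabilizer H ((1 : G₀) : G₀ ⧸ L) = L.subgroupOf H := by
    ext x
    rw [MulAction.mem_stabilizer_iff, Subgroup.mem_subgroupOf, smul_one, eq_comm,
      QuotientGroup.eq, inv_one, one_mul]
  have horbit : ((↑) '' (H : Set G₀) : Set (G₀ ⧸ L)) = MulAction.orbit H ((1 : G₀) : G₀ ⧸ L) := by
    ext x
    simp [MulAction.mem_orbit_iff, smul_one]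
  rw [← Nat.card_coe_set_eq, Subgroup.card_mul_eq_card_subgroup_mul_card_quotient, horbit,
    Nat.card_coe_set_eq, ← MulAction.index_stabilizer, hstab, Subgroup.relIndex]

/-- Each `x ∈ P⁻¹ * Q` has at most `|H ⊓ L|` representations `p⁻¹ * q`: if `r⁻¹ * s` is another
one, then `r * p⁻¹ = s * q⁻¹` lies in `H ⊓ L`. -/
theorem ncard_mul_ncard_le [Finite H] [Finite L] (hP : P ⊆ H) (hQ : Q ⊆ L) :
    P.ncard * Q.ncard ≤ Nat.card ↥(H ⊓ L) * (P⁻¹ * Q).ncard := by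
  have hPfin : P.Finite := (Set.toFinite _).subset hP
  have hQfin : Q.Finite := (Set.toFinite _).subset hQ
  have exists_rep (x : G₀) : ∃ r, x ∈ P⁻¹ * Q → r ∈ P ∧ r * x ∈ Q := by
    by_cases hx : x ∈ P⁻¹ * Q
    · obtain ⟨p, hp, q, hq, rfl⟩ := hx
      exact ⟨p⁻¹, fun _ ↦ ⟨hp, by simpa using hq⟩⟩
    · exact ⟨1, fun h ↦ absurd h hx⟩
  choose r hr using exists_rep
  change _ ≤ ((H ⊓ L : Subgroup G₀) : Set G₀).ncard * _
  rw [← Set.ncard_prod, ← Set.ncard_prod]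
  refine Set.ncard_le_ncard_of_injOn (fun a ↦ (r (a.1⁻¹ * a.2) * a.1⁻¹, a.1⁻¹ * a.2)) ?_ ?_
    (((Set.toFinite (H : Set G₀)).subset inf_le_left).prod (hPfin.inv.mul hQfin))
  · rintro ⟨p, q⟩ ⟨hp, hq⟩
    have hx : p⁻¹ * q ∈ P⁻¹ * Q := Set.mul_mem_mul (Set.inv_mem_inv.2 hp) hq
    obtain ⟨hrP, hrQ⟩ := hr _ hx
    refine ⟨⟨H.mul_mem (hP hrP) (H.inv_mem (hP hp)), ?_⟩, hx⟩
    simpa [mul_assoc] using L.mul_mem (hQ hrQ) (L.inv_mem (hQ hq))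
  · rintro ⟨p, q⟩ - ⟨p', q'⟩ - h
    obtain ⟨hrep, hx⟩ := Prod.ext_iff.1 h
    dsimp only at hrep hx
    obtain rfl : p = p' := by simpa [hx] using hrep
    simpa using hx

/-- For `a ∈ H` and `b ∈ L` the sets `P * a` and `Q * b⁻¹` meet inside `H ∪ L`, and
`p * a = q * b⁻¹` means `p⁻¹ * q = a * b`. -/
theorem inv_mul_eq_mul_of_ncard_union_lt [Finite H] [Finite L] (hP : P ⊆ H) (hQ : Q ⊆ L)
    (hlt : ((H : Set G₀) ∪ L).ncard < P.ncard + Q.ncard) : P⁻¹ * Q = (H : Set G₀) * L := by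
  refine (Set.mul_subset_mul (by rwa [Set.inv_subset, inv_coe_set]) hQ).antisymm ?_
  rintro _ ⟨a, ha, b, hb, rfl⟩
  have hmeet : (op a • P ∩ op b⁻¹ • Q).Nonempty := by
    by_contra! h
    have hsub : op a • P ∪ op b⁻¹ • Q ⊆ (H : Set G₀) ∪ L := Set.union_subset_union
      ((Set.smul_set_mono hP).trans (op_smul_coe_set ha).le)
      ((Set.smul_set_mono hQ).trans (op_smul_coe_set (L.inv_mem hb)).le)
    have hfin : ((H : Set G₀) ∪ L).Finite := (Set.toFinite _).union (Set.toFinite _)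
    have := Set.ncard_le_ncard hsub hfin
    rw [Set.ncard_union_eq (Set.disjoint_iff_inter_eq_empty.2 h)
      (hfin.subset (Set.subset_union_left.trans hsub))
      (hfin.subset (Set.subset_union_right.trans hsub)),
      Set.ncard_smul_set, Set.ncard_smul_set] at this
    lia
  obtain ⟨_, ⟨p, hp, rfl⟩, q, hq, hpq⟩ := hmeet
  refine ⟨p⁻¹, Set.inv_mem_inv.2 hp, q, hq, ?_⟩
  have hpq : q * b⁻¹ = p * a := hpq
  rw [mul_inv_eq_iff_eq_mul] at hpq
  simp [hpq, mul_assoc]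

theorem inv_mul_self_eq_coe_of_card_lt [Finite H] (hP : P ⊆ H) (hlt : Nat.card H < 2 * P.ncard) :
    P⁻¹ * P = (H : Set G₀) := by
  rw [inv_mul_eq_mul_of_ncard_union_lt hP hP, coe_mul_coe]
  rw [Set.union_self, ← Nat.card_coe_set_eq]
  exact hlt.trans_eq (two_mul _)

theorem card_conj_smul (z : G₀) (H : Subgroup G₀) :
    Nat.card ↥(MulAut.conj z • H) = Nat.card H :=
  Set.natCard_smul_set (MulAut.conj z) (H : Set G₀)

theorem conj_smul_eq_self_of_le [Finite H] (h : H ≤ MulAut.conj z • H) : MulAut.conj z • H = H := by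
  refine SetLike.coe_injective (Set.eq_of_subset_of_ncard_le h ?_ ?_).symm
  · rw [Subgroup.coe_pointwise_smul, Set.ncard_smul_set]
  · exact (Set.toFinite (H : Set G₀)).smul_set

theorem op_smul_coe_conj_smul (z : G₀) (H : Subgroup G₀) :
    op z • ((MulAut.conj z • H : Subgroup G₀) : Set G₀) = z • (H : Set G₀) := by
  ext x
  simp [mem_leftCoset_iff, Set.mem_smul_set_iff_inv_smul_mem, ← map_inv]

theorem op_smul_coe_of_conj_smul_eq (hz : MulAut.conj z • H = H) :
    op z • (H : Set G₀) = z • (H : Set G₀) := by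
  rw [← op_smul_coe_conj_smul z H, hz]

theorem le_normalizer_of_relIndex_le_two [Finite H] (hKH : K ≤ H) (hle : K.relIndex H ≤ 2) :
    H ≤ Subgroup.normalizer (K : Set G₀) := by
  rw [← Subgroup.normal_subgroupOf_iff_le_normalizer hKH]
  have hne : K.relIndex H ≠ 0 := Subgroup.index_ne_zero_of_finite
  obtain h | h : K.relIndex H = 1 ∨ K.relIndex H = 2 := by lia
  · exact Subgroup.normal_of_index_eq_one h
  · exact Subgroup.normal_of_index_eq_two h

theorem conj_smul_inf_conj_smul (hz : MulAut.conj (z * z) • H = H) :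
    MulAut.conj z • (H ⊓ MulAut.conj z • H) = H ⊓ MulAut.conj z • H := by
  rw [Subgroup.smul_inf, smul_smul, ← map_mul, hz, inf_comm]

theorem conj_inv_smul_eq_conj_smul (hzz : z * z ∈ H) :
    MulAut.conj z⁻¹ • H = MulAut.conj z • H := by
  rw [map_inv, inv_smul_eq_iff, smul_smul, ← map_mul, Subgroup.conj_smul_eq_self_of_mem hzz]

theorem two_le_relIndex_conj_smul [Finite H] (h : MulAut.conj z • H ≠ H) :
    2 ≤ (MulAut.conj z • H).relIndex H := by
  have h0 : (MulAut.conj z • H).relIndex H ≠ 0 := Subgroup.index_ne_zero_of_finite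
  have h1 : (MulAut.conj z • H).relIndex H ≠ 1 := fun h1 ↦
    h (conj_smul_eq_self_of_le (Subgroup.relIndex_eq_one.1 h1))
  lia

theorem ncard_coe_union_add_card_inf (H L : Subgroup G₀) [Finite H] [Finite L] :
    ((H : Set G₀) ∪ L).ncard + Nat.card ↥(H ⊓ L) = Nat.card H + Nat.card L :=
  Set.ncard_union_add_ncard_inter _ _ (Set.toFinite (H : Set G₀)) (Set.toFinite (L : Set G₀))

theorem inv_doubleCoset (z : G₀) (H : Subgroup G₀) :
    (doubleCoset z (H : Set G₀) H)⁻¹ = doubleCoset z⁻¹ (H : Set G₀) H := by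
  rw [DoubleCoset.doubleCoset, mul_inv_rev, mul_inv_rev, Set.inv_singleton, inv_coe_set,
    DoubleCoset.doubleCoset, mul_assoc]

theorem doubleCoset_eq_op_smul (z : G₀) (H : Subgroup G₀) :
    doubleCoset z (H : Set G₀) H =
      op z • ((H : Set G₀) * (MulAut.conj z • H : Subgroup G₀)) := by
  rw [← mul_smul_comm, op_smul_coe_conj_smul, DoubleCoset.doubleCoset, mul_assoc,
    Set.singleton_mul]
  rfl

theorem ncard_doubleCoset (z : G₀) (H : Subgroup G₀) :
    (doubleCoset z (H : Set G₀) H).ncard =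
      Nat.card H * (MulAut.conj z • H).relIndex H := by
  rw [doubleCoset_eq_op_smul, Set.ncard_smul_set, ncard_coe_mul_coe, card_conj_smul]

theorem disjoint_coe_doubleCoset (hz : z ∉ H) :
    Disjoint (H : Set G₀) (doubleCoset z (H : Set G₀) H) := by
  rw [Set.disjoint_left]
  rintro _ hx hxz
  obtain ⟨a, ha, b, hb, rfl⟩ := DoubleCoset.mem_doubleCoset.1 hxz
  exact hz ((H.mul_mem_cancel_left ha).1 ((H.mul_mem_cancel_right hb).1 hx))

theorem exists_mul_self_mem_of_not_disjoint_doubleCoset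
    (h : ¬ Disjoint (doubleCoset z (H : Set G₀) H)
      (doubleCoset z⁻¹ (H : Set G₀) H)) :
    ∃ w, w * w ∈ H ∧
      doubleCoset z (H : Set G₀) H = doubleCoset w (H : Set G₀) H ∧
      doubleCoset z⁻¹ (H : Set G₀) H = doubleCoset w (H : Set G₀) H := by
  obtain ⟨a, ha, b, hb, hab⟩ :=
    DoubleCoset.mem_doubleCoset.1 (DoubleCoset.mem_doubleCoset_of_not_disjoint h)
  have hw : z * b ∈ doubleCoset z (H : Set G₀) H :=
    DoubleCoset.mem_doubleCoset.2 ⟨1, H.one_mem, b, hb, by rw [one_mul]⟩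
  refine ⟨z * b, ?_, (DoubleCoset.doubleCoset_eq_of_mem hw).symm,
    (DoubleCoset.eq_of_not_disjoint h).symm.trans (DoubleCoset.doubleCoset_eq_of_mem hw).symm⟩
  have hzb : z * b = a⁻¹ * z⁻¹ := by rw [hab]; group
  have hsq : z * b * (z * b) = a⁻¹ * b := by nth_rewrite 1 [hzb]; group
  exact hsq ▸ H.mul_mem (H.inv_mem ha) hb

theorem coe_closure_union_smul (hz : MulAut.conj z • H = H) (hzz : z * z ∈ H) :
    (Subgroup.closure ((H : Set G₀) ∪ z • (H : Set G₀)) : Set G₀) =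
      (H : Set G₀) ∪ z • (H : Set G₀) := by
  have hcomm := op_smul_coe_of_conj_smul_eq hz
  have hHz : (H : Set G₀) * z • (H : Set G₀) = z • (H : Set G₀) := by
    rw [← hcomm, mul_smul_comm, coe_mul_coe]
  have hinv : ((H : Set G₀) ∪ z • (H : Set G₀))⁻¹ = (H : Set G₀) ∪ z • (H : Set G₀) := by
    rw [Set.union_inv, inv_coe_set, ← hcomm, Set.inv_op_smul_set_distrib, inv_coe_set, hcomm,
      (leftCoset_eq_iff H).2 (by simpa using hzz)]
  have hmul : ((H : Set G₀) ∪ z • (H : Set G₀)) * ((H : Set G₀) ∪ z • (H : Set G₀)) ⊆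
      (H : Set G₀) ∪ z • (H : Set G₀) := by
    rw [Set.union_mul, Set.mul_union, Set.mul_union, smul_mul_assoc, smul_mul_assoc, hHz,
      smul_smul, smul_coe_set hzz, coe_mul_coe]
    simp
  refine Set.Subset.antisymm (fun x hx ↦ ?_) Subgroup.subset_closure
  induction hx using Subgroup.closure_induction with
  | mem _ hx => exact hx
  | one => exact .inl H.one_mem
  | mul _ _ _ _ hx hy => exact hmul (Set.mul_mem_mul hx hy)
  | inv _ _ hx => rwa [← hinv, Set.inv_mem_inv]

end Subgroups

section TwoCosets

variable {G₀ : Type*} [Group G₀] {H L : Subgroup G₀} {A D P Q : Set G₀} {z : G₀}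

theorem inv_mul_union_op_smul (P Q : Set G₀) (z : G₀) :
    (P ∪ op z • Q)⁻¹ * (P ∪ op z • Q) =
      P⁻¹ * P ∪ MulAut.conj z⁻¹ • (Q⁻¹ * Q) ∪ (op z • (P⁻¹ * Q) ∪ (op z • (P⁻¹ * Q))⁻¹) := by
  have hconj : MulAut.conj z⁻¹ • (Q⁻¹ * Q) = z⁻¹ • op z • (Q⁻¹ * Q) := by
    ext x
    simp only [Set.mem_smul_set_iff_inv_smul_mem, ← map_inv, ← MulOpposite.op_inv, inv_inv,
      MulAut.smul_def, MulAut.conj_apply, smul_eq_mul, MulOpposite.smul_eq_mul_unop,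
      MulOpposite.unop_op, mul_assoc]
  rw [hconj, Set.union_inv, Set.union_mul, Set.mul_union, Set.mul_union, mul_smul_comm,
    mul_smul_comm, Set.inv_op_smul_set_distrib, Set.inv_op_smul_set_distrib, mul_inv_rev, inv_inv,
    smul_mul_assoc, smul_mul_assoc, smul_comm]
  ac_rfl

theorem ncard_le_two_mul_card_of_subset_union_smul [Finite H] {α : Type*} [Group α]
    [MulAction α G₀] {g : α} (hA : A ⊆ (H : Set G₀) ∪ g • (H : Set G₀)) :
    A.ncard ≤ 2 * Nat.card H :=
  calc A.ncard ≤ ((H : Set G₀) ∪ g • (H : Set G₀)).ncard :=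
        Set.ncard_le_ncard hA ((Set.toFinite _).union (Set.toFinite (H : Set G₀)).smul_set)
    _ ≤ (H : Set G₀).ncard + (g • (H : Set G₀)).ncard := Set.ncard_union_le _ _
    _ = 2 * Nat.card H := by rw [Set.ncard_smul_set, ← two_mul]; rfl

theorem exists_large_parts_of_subset_union_op_smul [Finite H] [Finite L]
    (hLH : Nat.card L = Nat.card H) (hA : A ⊆ (H : Set G₀) ∪ op z • (L : Set G₀))
    (hcard : 3 * Nat.card H < 2 * A.ncard) :
    ∃ P Q : Set G₀, P ⊆ H ∧ Q ⊆ L ∧ A = P ∪ op z • Q ∧ A.ncard ≤ P.ncard + Q.ncard ∧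
      Nat.card H < 2 * P.ncard ∧ Nat.card H < 2 * Q.ncard := by
  refine ⟨A ∩ H, op z⁻¹ • A ∩ L, Set.inter_subset_right, Set.inter_subset_right, ?_⟩
  have hunion : A = A ∩ H ∪ op z • (op z⁻¹ • A ∩ L) := by
    rw [Set.smul_set_inter, smul_smul, ← MulOpposite.op_mul, inv_mul_cancel, MulOpposite.op_one,
      one_smul, ← Set.inter_union_distrib_left, Set.inter_eq_left.2 hA]
  have hle : A.ncard ≤ (A ∩ H).ncard + (op z⁻¹ • A ∩ L).ncard :=
    calc A.ncard = (A ∩ H ∪ op z • (op z⁻¹ • A ∩ L)).ncard := congrArg _ hunion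
      _ ≤ (A ∩ H).ncard + (op z⁻¹ • A ∩ L).ncard :=
        (Set.ncard_union_le _ _).trans_eq (by rw [Set.ncard_smul_set])
  have hP : (A ∩ H).ncard ≤ Nat.card H := Set.ncard_inter_le_ncard_right _ _
  have hQ : (op z⁻¹ • A ∩ L).ncard ≤ Nat.card L := Set.ncard_inter_le_ncard_right _ _
  exact ⟨hunion, hle, by lia, by lia⟩

theorem inv_mul_self_eq_of_subset_union_op_smul [Finite H] [Finite L]
    (hLH : Nat.card L = Nat.card H) (hA : A ⊆ (H : Set G₀) ∪ op z • (L : Set G₀))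
    (hcard : 3 * Nat.card H < 2 * A.ncard) (hlt : ((H : Set G₀) ∪ L).ncard < A.ncard) :
    A⁻¹ * A = (H : Set G₀) ∪ (MulAut.conj z⁻¹ • L : Subgroup G₀) ∪
      (op z • ((H : Set G₀) * L) ∪ (op z • ((H : Set G₀) * L))⁻¹) := by
  obtain ⟨P, Q, hP, hQ, rfl, hle, hPcard, hQcard⟩ :=
    exists_large_parts_of_subset_union_op_smul hLH hA hcard
  rw [inv_mul_union_op_smul, inv_mul_self_eq_coe_of_card_lt hP hPcard,
    inv_mul_self_eq_coe_of_card_lt hQ (hLH.trans_lt hQcard),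
    inv_mul_eq_mul_of_ncard_union_lt hP hQ (hlt.trans_le hle), Subgroup.coe_pointwise_smul]

theorem card_add_ncard_le_ncard_inv_mul_self [Finite H] (hz : z ∉ H) (hP : P ⊆ H)
    (hQ : Q ⊆ (MulAut.conj z • H : Subgroup G₀)) (hPcard : Nat.card H < 2 * P.ncard) :
    Nat.card H + (P⁻¹ * Q).ncard ≤ ((P ∪ op z • Q)⁻¹ * (P ∪ op z • Q)).ncard := by
  have hPfin : P.Finite := (Set.toFinite _).subset hP
  have hQfin : Q.Finite := (Set.toFinite (H : Set G₀)).smul_set.subset hQ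
  have hPQ_sub : op z • (P⁻¹ * Q) ⊆ doubleCoset z (H : Set G₀) H := by
    rw [doubleCoset_eq_op_smul]
    exact Set.smul_set_mono (Set.mul_subset_mul (by rwa [Set.inv_subset, inv_coe_set]) hQ)
  calc Nat.card H + (P⁻¹ * Q).ncard = ((H : Set G₀) ∪ op z • (P⁻¹ * Q)).ncard := by
        rw [Set.ncard_union_eq ((disjoint_coe_doubleCoset hz).mono_right hPQ_sub)
          (Set.toFinite _) (hPfin.inv.mul hQfin).smul_set, Set.ncard_smul_set,
          ← Nat.card_coe_set_eq (H : Set G₀), SetLike.coe_sort_coe]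
    _ ≤ ((P ∪ op z • Q)⁻¹ * (P ∪ op z • Q)).ncard := by
        have hfin := hPfin.union (hQfin.smul_set (a := op z))
        refine Set.ncard_le_ncard ?_ (hfin.inv.mul hfin)
        rw [inv_mul_union_op_smul, inv_mul_self_eq_coe_of_card_lt hP hPcard]
        exact Set.union_subset_union Set.subset_union_left Set.subset_union_left

theorem relIndex_conj_smul_le_two [Finite H] (hz : z ∉ H)
    (hA : A ⊆ (H : Set G₀) ∪ z • (H : Set G₀)) (hcard : 3 * Nat.card H < 2 * A.ncard)
    (hsmall : 3 * (A⁻¹ * A).ncard < 5 * A.ncard) : (MulAut.conj z • H).relIndex H ≤ 2 := by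
  have : Finite ↥(MulAut.conj z • H) := (Set.toFinite (H : Set G₀)).smul_set
  rw [← op_smul_coe_conj_smul] at hA
  obtain ⟨P, Q, hP, hQ, hunion, hle, hPcard, -⟩ :=
    exists_large_parts_of_subset_union_op_smul (card_conj_smul z H) hA hcard
  have hD := card_add_ncard_le_ncard_inv_mul_self hz hP hQ hPcard
  rw [← hunion] at hD
  have hPle : P.ncard ≤ Nat.card H := Set.ncard_le_ncard hP (Set.toFinite _)
  have hQle : Q.ncard ≤ Nat.card H :=
    (Set.ncard_le_ncard hQ (Set.toFinite _)).trans_eq (card_conj_smul z H)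
  have hfibre := ncard_mul_ncard_le hP hQ
  have hindex := card_inf_mul_relIndex H (MulAut.conj z • H)
  by_contra! hge
  have hpos : 0 < Nat.card H := Nat.card_pos
  have hinf : 3 * Nat.card ↥(H ⊓ MulAut.conj z • H) ≤ Nat.card H := by nlinarith
  have hPQ : 3 * (P.ncard * Q.ncard) ≤ Nat.card H * (P⁻¹ * Q).ncard := by nlinarith
  have hprod : Nat.card H * (P.ncard + Q.ncard) ≤ P.ncard * Q.ncard + Nat.card H * Nat.card H := by
    zify at hPle hQle ⊢
    linarith [mul_nonneg (sub_nonneg.2 hPle) (sub_nonneg.2 hQle)]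
  have hPQ_lt : 3 * (P⁻¹ * Q).ncard + 3 * Nat.card H < 5 * (P.ncard + Q.ncard) := by lia
  have hPQ_gt : 3 * Nat.card H < 2 * (P.ncard + Q.ncard) := by lia
  linarith [Nat.mul_lt_mul_of_pos_left hPQ_lt hpos, Nat.mul_lt_mul_of_pos_left hPQ_gt hpos]

theorem inv_mul_self_eq_of_subset_union_smul [Finite H] (hz : z ∉ H)
    (hA : A ⊆ (H : Set G₀) ∪ z • (H : Set G₀)) (hcard : 3 * Nat.card H < 2 * A.ncard)
    (hsmall : 3 * (A⁻¹ * A).ncard < 5 * A.ncard) :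
    A⁻¹ * A = (H : Set G₀) ∪ (doubleCoset z (H : Set G₀) H ∪ doubleCoset z⁻¹ (H : Set G₀) H) := by
  have : Finite ↥(MulAut.conj z • H) := (Set.toFinite (H : Set G₀)).smul_set
  have hindex := card_inf_mul_relIndex H (MulAut.conj z • H)
  have hle := relIndex_conj_smul_le_two hz hA hcard hsmall
  have hunion := ncard_coe_union_add_card_inf H (MulAut.conj z • H)
  rw [card_conj_smul] at hunion
  rw [← op_smul_coe_conj_smul] at hA
  rw [inv_mul_self_eq_of_subset_union_op_smul (card_conj_smul z H) hA hcard (by nlinarith),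
    ← doubleCoset_eq_op_smul, inv_doubleCoset, smul_smul, ← map_mul, inv_mul_cancel, map_one,
    one_smul, Set.union_self]

/-- The shape of `D = A⁻¹A` when `3|D| < 5|A|`: `D` is three times as large as a subgroup `H ⊆ D`
and lies in `⟨H, z⟩`, where `H` is normalised by `z * z` and meets its conjugate by `z` in a
subgroup `K` of index at most two, with `DK = D`. The conditions on `z` make `⟨H, z⟩` normalise
`K`. -/
structure HasTripleStructure (D : Set G₀) (H : Subgroup G₀) (z : G₀) : Prop where
  coe_subset : (H : Set G₀) ⊆ D
  subset_sup : D ⊆ (H ⊔ Subgroup.zpowers z : Subgroup G₀)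
  conj_mul_self_smul : MulAut.conj (z * z) • H = H
  relIndex_le_two : (MulAut.conj z • H).relIndex H ≤ 2
  ncard_eq : D.ncard = 3 * Nat.card H
  mul_inf_subset : D * (H ⊓ MulAut.conj z • H : Subgroup G₀) ⊆ D

theorem doubleCoset_subset_sup_zpowers (z : G₀) (H : Subgroup G₀) :
    doubleCoset z (H : Set G₀) H ⊆ (H ⊔ Subgroup.zpowers z : Subgroup G₀) := by
  intro x hx
  obtain ⟨a, ha, b, hb, rfl⟩ := DoubleCoset.mem_doubleCoset.1 hx
  have hle : H ≤ H ⊔ Subgroup.zpowers z := le_sup_left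
  exact mul_mem (mul_mem (hle ha) (Subgroup.mem_sup_right (Subgroup.mem_zpowers z))) (hle hb)

theorem doubleCoset_mul_coe (z : G₀) (H : Subgroup G₀) :
    doubleCoset z (H : Set G₀) H * H = doubleCoset z (H : Set G₀) H := by
  rw [doubleCoset, mul_assoc, coe_mul_coe]

theorem hasTripleStructure_of_disjoint_doubleCoset [Finite H] (hz : z ∉ H)
    (hdisj : Disjoint (doubleCoset z (H : Set G₀) H) (doubleCoset z⁻¹ (H : Set G₀) H))
    (hD : D = (H : Set G₀) ∪ (doubleCoset z (H : Set G₀) H ∪ doubleCoset z⁻¹ (H : Set G₀) H))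
    (hlt : 3 * D.ncard < 10 * Nat.card H) : HasTripleStructure D H z := by
  have hfin (w : G₀) : (doubleCoset w (H : Set G₀) H).Finite :=
    ((Set.toFinite _).mul (Set.toFinite _)).mul (Set.toFinite _)
  have hncard : D.ncard = Nat.card H * (1 + 2 * (MulAut.conj z • H).relIndex H) := by
    rw [hD, Set.ncard_union_eq (Set.disjoint_union_right.2 ⟨disjoint_coe_doubleCoset hz,
      disjoint_coe_doubleCoset (by rwa [inv_mem_iff])⟩) (Set.toFinite _) ((hfin z).union (hfin _)),
      Set.ncard_union_eq hdisj (hfin z) (hfin _), ← inv_doubleCoset, Set.ncard_inv,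
      ncard_doubleCoset, ← Nat.card_coe_set_eq, SetLike.coe_sort_coe]
    ring
  have hindex : (MulAut.conj z • H).relIndex H = 1 := by
    have : (MulAut.conj z • H).relIndex H ≠ 0 := Subgroup.index_ne_zero_of_finite
    by_contra h
    have : 2 ≤ (MulAut.conj z • H).relIndex H := by lia
    nlinarith
  have hnorm : MulAut.conj z • H = H := conj_smul_eq_self_of_le (Subgroup.relIndex_eq_one.1 hindex)
  refine ⟨hD ▸ Set.subset_union_left, ?_, by rw [map_mul, mul_smul, hnorm, hnorm],
    by rw [hindex]; exact one_le_two, by rw [hncard, hindex, mul_comm], ?_⟩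
  · have hinv := doubleCoset_subset_sup_zpowers z⁻¹ H
    rw [Subgroup.zpowers_inv] at hinv
    rw [hD]
    exact Set.union_subset (SetLike.coe_subset_coe.2 le_sup_left)
      (Set.union_subset (doubleCoset_subset_sup_zpowers z H) hinv)
  · refine (Set.mul_subset_mul_left (SetLike.coe_subset_coe.2 inf_le_left)).trans_eq ?_
    rw [hD, Set.union_mul, Set.union_mul, coe_mul_coe, doubleCoset_mul_coe, doubleCoset_mul_coe]

theorem hasTripleStructure_of_eq_union_doubleCoset [Finite H] (hz : z ∉ H) (hzz : z * z ∈ H)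
    (hD : D = (H : Set G₀) ∪ doubleCoset z (H : Set G₀) H)
    (hproper : D ≠ Subgroup.closure D) (hlt : 3 * D.ncard < 10 * Nat.card H) :
    HasTripleStructure D H z := by
  have hfin : (doubleCoset z (H : Set G₀) H).Finite :=
    ((Set.toFinite _).mul (Set.toFinite _)).mul (Set.toFinite _)
  have hncard : D.ncard = Nat.card H * (1 + (MulAut.conj z • H).relIndex H) := by
    rw [hD, Set.ncard_union_eq (disjoint_coe_doubleCoset hz) (Set.toFinite _) hfin,
      ncard_doubleCoset, ← Nat.card_coe_set_eq, SetLike.coe_sort_coe]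
    ring
  have hnorm : MulAut.conj z • H ≠ H := by
    intro hnorm
    rw [doubleCoset_eq_op_smul, hnorm, coe_mul_coe, op_smul_coe_of_conj_smul_eq hnorm] at hD
    exact hproper (hD ▸ (coe_closure_union_smul hnorm hzz).symm)
  have hindex : (MulAut.conj z • H).relIndex H = 2 := by
    have := two_le_relIndex_conj_smul hnorm
    by_contra h
    have : 3 ≤ (MulAut.conj z • H).relIndex H := by lia
    nlinarith
  refine ⟨hD ▸ Set.subset_union_left, ?_, Subgroup.conj_smul_eq_self_of_mem hzz, hindex.le,
    by rw [hncard, hindex, mul_comm], ?_⟩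
  · rw [hD]
    exact Set.union_subset (SetLike.coe_subset_coe.2 le_sup_left)
      (doubleCoset_subset_sup_zpowers z H)
  · refine (Set.mul_subset_mul_left (SetLike.coe_subset_coe.2 inf_le_left)).trans_eq ?_
    rw [hD, Set.union_mul, coe_mul_coe, doubleCoset_mul_coe]

theorem exists_hasTripleStructure_of_subset_union_smul [Finite H] (hz : z ∉ H)
    (hA : A ⊆ (H : Set G₀) ∪ z • (H : Set G₀)) (hcard : 3 * Nat.card H < 2 * A.ncard)
    (hsmall : 3 * (A⁻¹ * A).ncard < 5 * A.ncard)
    (hproper : A⁻¹ * A ≠ Subgroup.closure (A⁻¹ * A)) :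
    ∃ w, HasTripleStructure (A⁻¹ * A) H w := by
  have hD := inv_mul_self_eq_of_subset_union_smul hz hA hcard hsmall
  have hlt : 3 * (A⁻¹ * A).ncard < 10 * Nat.card H := by
    have := ncard_le_two_mul_card_of_subset_union_smul hA
    lia
  by_cases hdisj : Disjoint (doubleCoset z (H : Set G₀) H) (doubleCoset z⁻¹ (H : Set G₀) H)
  · exact ⟨z, hasTripleStructure_of_disjoint_doubleCoset hz hdisj hD hlt⟩
  · obtain ⟨w, hww, hzw, hzw'⟩ := exists_mul_self_mem_of_not_disjoint_doubleCoset hdisj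
    rw [hzw, hzw', Set.union_self] at hD
    refine ⟨w, hasTripleStructure_of_eq_union_doubleCoset (fun hw ↦ ?_) hww hD hproper hlt⟩
    have := disjoint_coe_doubleCoset hz
    rw [hzw] at this
    exact Set.disjoint_left.1 this hw (DoubleCoset.mem_doubleCoset_self H H w)

theorem exists_op_smul_eq_and_mul_self_mem (z : G₀) (H : Subgroup G₀) :
    ∃ w, op w • (H : Set G₀) = op z • (H : Set G₀) ∧
      (w * w ∈ H ∨ Disjoint (op w • (H : Set G₀)) (op w • (H : Set G₀))⁻¹) := by
  by_cases hdisj : Disjoint (op z • (H : Set G₀)) (op z • (H : Set G₀))⁻¹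
  · exact ⟨z, rfl, .inr hdisj⟩
  · obtain ⟨w, hw, hw_inv⟩ := Set.not_disjoint_iff.1 hdisj
    rw [Set.mem_inv, mem_rightCoset_iff] at hw_inv
    rw [mem_rightCoset_iff] at hw
    refine ⟨w, (rightCoset_eq_iff H).2 (by simpa using H.inv_mem hw), .inl ?_⟩
    have hww : w * z⁻¹ * (w⁻¹ * z⁻¹)⁻¹ = w * w := by group
    exact hww ▸ H.mul_mem hw (H.inv_mem hw_inv)

theorem three_mul_card_le_two_mul_ncard_union [Finite H] (hz : MulAut.conj z • H ≠ H) :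
    3 * Nat.card H ≤ 2 * ((H : Set G₀) ∪ (MulAut.conj z • H : Subgroup G₀)).ncard := by
  have : Finite ↥(MulAut.conj z • H) := (Set.toFinite (H : Set G₀)).smul_set
  have hunion := ncard_coe_union_add_card_inf H (MulAut.conj z • H)
  rw [card_conj_smul] at hunion
  have hindex := card_inf_mul_relIndex H (MulAut.conj z • H)
  have htwo := two_le_relIndex_conj_smul hz
  nlinarith

theorem disjoint_union_conj_smul_union_op_smul (hz : z ∉ H) :
    Disjoint ((H : Set G₀) ∪ (MulAut.conj z⁻¹ • H : Subgroup G₀))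
      (op z • (H : Set G₀) ∪ (op z • (H : Set G₀))⁻¹) := by
  have hdisj : Disjoint ((H : Set G₀) ∪ (MulAut.conj z⁻¹ • H : Subgroup G₀))
      (op z • (H : Set G₀)) := by
    rw [Set.disjoint_left]
    rintro x (hx | hx) hxz <;> rw [mem_rightCoset_iff] at hxz
    · exact hz (by simpa using (H.mul_mem_cancel_left hx).1 hxz)
    · rw [SetLike.mem_coe, Subgroup.mem_pointwise_smul_iff_inv_smul_mem, ← map_inv, inv_inv,
        MulAut.smul_def, MulAut.conj_apply, mul_assoc] at hx
      exact hz ((H.mul_mem_cancel_right hxz).1 hx)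
  have hdisj_inv := hdisj.preimage Inv.inv
  rw [Set.inv_preimage, Set.inv_preimage, Set.union_inv, inv_coe_set, inv_coe_set] at hdisj_inv
  exact Set.disjoint_union_right.2 ⟨hdisj, hdisj_inv⟩

theorem seven_mul_card_le_two_mul_ncard [Finite H] (hz : z ∉ H) (hnorm : MulAut.conj z • H ≠ H)
    (hdisj : Disjoint (op z • (H : Set G₀)) (op z • (H : Set G₀))⁻¹) :
    7 * Nat.card H ≤ 2 * ((H : Set G₀) ∪ (MulAut.conj z⁻¹ • H : Subgroup G₀) ∪
      (op z • (H : Set G₀) ∪ (op z • (H : Set G₀))⁻¹)).ncard := by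
  have hnorm_inv : MulAut.conj z⁻¹ • H ≠ H := by
    rwa [Ne, map_inv, inv_smul_eq_iff, eq_comm]
  have hunion := three_mul_card_le_two_mul_ncard_union hnorm_inv
  have hfin : (op z • (H : Set G₀)).Finite := (Set.toFinite (H : Set G₀)).smul_set
  rw [Set.ncard_union_eq (disjoint_union_conj_smul_union_op_smul hz)
    ((Set.toFinite _).union (Set.toFinite (H : Set G₀)).smul_set) (hfin.union hfin.inv),
    Set.ncard_union_eq hdisj hfin hfin.inv, Set.ncard_inv, Set.ncard_smul_set,
    ← Nat.card_coe_set_eq (H : Set G₀), SetLike.coe_sort_coe]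
  lia

theorem op_smul_union_inv_op_smul (hzz : z * z ∈ H) :
    op z • (H : Set G₀) ∪ (op z • (H : Set G₀))⁻¹ =
      op z • ((H : Set G₀) ∪ (MulAut.conj z • H : Subgroup G₀)) := by
  rw [Set.smul_set_union, op_smul_coe_conj_smul, Set.inv_op_smul_set_distrib, inv_coe_set,
    (leftCoset_eq_iff H).2 (by simpa using hzz)]

theorem union_mul_inf_subset (H L : Subgroup G₀) :
    ((H : Set G₀) ∪ L) * (H ⊓ L : Subgroup G₀) ⊆ (H : Set G₀) ∪ L := by
  rw [Set.union_mul]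
  exact Set.union_subset_union (Subgroup.mul_subset subset_rfl inf_le_left)
    (Subgroup.mul_subset subset_rfl inf_le_right)

theorem hasTripleStructure_of_eq_union_op_smul [Finite H] (hz : z ∉ H) (hzz : z * z ∈ H)
    (hnorm : MulAut.conj z • H ≠ H)
    (hD : D = (H : Set G₀) ∪ (MulAut.conj z⁻¹ • H : Subgroup G₀) ∪
      (op z • (H : Set G₀) ∪ (op z • (H : Set G₀))⁻¹))
    (hlt : 3 * D.ncard < 10 * Nat.card H) : HasTripleStructure D H z := by
  have : Finite ↥(MulAut.conj z • H) := (Set.toFinite (H : Set G₀)).smul_set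
  have hfin : ((H : Set G₀) ∪ (MulAut.conj z • H : Subgroup G₀)).Finite :=
    (Set.toFinite _).union (Set.toFinite _)
  have hzz_norm : MulAut.conj (z * z) • H = H := Subgroup.conj_smul_eq_self_of_mem hzz
  have hdisj := disjoint_union_conj_smul_union_op_smul hz
  rw [op_smul_union_inv_op_smul hzz, conj_inv_smul_eq_conj_smul hzz] at hD hdisj
  have hncard : D.ncard = 2 * ((H : Set G₀) ∪ (MulAut.conj z • H : Subgroup G₀)).ncard := by
    rw [hD, Set.ncard_union_eq hdisj hfin hfin.smul_set, Set.ncard_smul_set, two_mul]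
  have hunion := ncard_coe_union_add_card_inf H (MulAut.conj z • H)
  rw [card_conj_smul] at hunion
  have hmul := card_inf_mul_relIndex H (MulAut.conj z • H)
  have hindex : (MulAut.conj z • H).relIndex H = 2 := by
    have := two_le_relIndex_conj_smul hnorm
    by_contra h
    have : 3 ≤ (MulAut.conj z • H).relIndex H := by lia
    nlinarith
  rw [hindex] at hmul
  refine ⟨hD ▸ Set.subset_union_left.trans Set.subset_union_left, ?_, hzz_norm, hindex.le,
    by lia, ?_⟩
  · have hz_mem : z ∈ H ⊔ Subgroup.zpowers z := Subgroup.mem_sup_right (Subgroup.mem_zpowers z)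
    have hconj_le : MulAut.conj z • H ≤ H ⊔ Subgroup.zpowers z :=
      (Subgroup.pointwise_smul_le_pointwise_smul_iff.2 le_sup_left).trans
        (Subgroup.conj_smul_eq_self_of_mem hz_mem).le
    have hunion_le := Set.union_subset (SetLike.coe_subset_coe.2 le_sup_left) hconj_le
    rw [hD]
    exact Set.union_subset hunion_le
      ((Set.smul_set_mono hunion_le).trans (op_smul_coe_set hz_mem).le)
  · have hK := op_smul_coe_of_conj_smul_eq (conj_smul_inf_conj_smul hzz_norm)
    rw [hD, Set.union_mul, Set.op_smul_set_mul_eq_mul_smul_set, ← hK, mul_smul_comm]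
    exact Set.union_subset_union (union_mul_inf_subset _ _)
      (Set.smul_set_mono (union_mul_inf_subset _ _))

theorem exists_hasTripleStructure_of_subset_union_op_smul [Finite H] (hz : z ∉ H)
    (hA : A ⊆ (H : Set G₀) ∪ op z • (H : Set G₀)) (hcard : 3 * Nat.card H < 2 * A.ncard)
    (hsmall : 3 * (A⁻¹ * A).ncard < 5 * A.ncard)
    (hproper : A⁻¹ * A ≠ Subgroup.closure (A⁻¹ * A)) :
    ∃ w, HasTripleStructure (A⁻¹ * A) H w := by
  obtain ⟨w, hwz, hw⟩ := exists_op_smul_eq_and_mul_self_mem z H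
  have hwH : w ∉ H := fun hwH ↦ by
    rw [op_smul_coe_set hwH] at hwz
    exact hz (SetLike.mem_coe.1 (hwz ▸ mem_own_rightCoset H.toSubmonoid z))
  rw [← hwz] at hA
  by_cases hnorm : MulAut.conj w • H = H
  · rw [op_smul_coe_of_conj_smul_eq hnorm] at hA
    exact exists_hasTripleStructure_of_subset_union_smul hwH hA hcard hsmall hproper
  have hle := ncard_le_two_mul_card_of_subset_union_smul hA
  have hD := inv_mul_self_eq_of_subset_union_op_smul rfl hA hcard (by
    rw [Set.union_self, ← Nat.card_coe_set_eq, SetLike.coe_sort_coe]; lia)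
  rw [coe_mul_coe] at hD
  rcases hw with hww | hdisj
  · exact ⟨w, hasTripleStructure_of_eq_union_op_smul hwH hww hnorm hD (by lia)⟩
  · have hge := seven_mul_card_le_two_mul_ncard hwH hnorm hdisj
    rw [← hD] at hge
    lia

theorem HasTripleStructure.closure_le_normalizer [Finite H] (hD : HasTripleStructure D H z) :
    Subgroup.closure D ≤
      Subgroup.normalizer ((H ⊓ MulAut.conj z • H : Subgroup G₀) : Set G₀) := by
  have hH : H ≤ Subgroup.normalizer ((H ⊓ MulAut.conj z • H : Subgroup G₀) : Set G₀) :=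
    le_normalizer_of_relIndex_le_two inf_le_left
      ((Subgroup.inf_relIndex_left H _).trans_le hD.relIndex_le_two)
  have hz : z ∈ Subgroup.normalizer ((H ⊓ MulAut.conj z • H : Subgroup G₀) : Set G₀) :=
    Subgroup.mem_normalizer_iff_map_conj_eq.2 (conj_smul_inf_conj_smul hD.conj_mul_self_smul)
  exact ((Subgroup.closure_le _).2 hD.subset_sup).trans
    (sup_le hH ((Subgroup.zpowers_le).2 hz))

theorem HasTripleStructure.card_le (hD : HasTripleStructure D H z) :
    Nat.card H ≤ 2 * Nat.card ↥(H ⊓ MulAut.conj z • H) := by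
  rw [← card_inf_mul_relIndex H (MulAut.conj z • H), mul_comm]
  exact Nat.mul_le_mul_right _ hD.relIndex_le_two

theorem HasTripleStructure.mul_inf_eq (hD : HasTripleStructure D H z) :
    D * (H ⊓ MulAut.conj z • H : Subgroup G₀) = D :=
  hD.mul_inf_subset.antisymm (Set.subset_mul_left D (one_mem (H ⊓ MulAut.conj z • H)))

theorem HasTripleStructure.inf_mul_eq (hD : HasTripleStructure D H z) (hinv : D⁻¹ = D) :
    ((H ⊓ MulAut.conj z • H : Subgroup G₀) : Set G₀) * D = D :=
  inv_injective (by rw [mul_inv_rev, inv_coe_set, hinv, hD.mul_inf_eq])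

theorem disjoint_op_smul_coe {y t : G₀} (ht : t ∉ op y • (H : Set G₀)) :
    Disjoint (op y • (H : Set G₀)) (op t • (H : Set G₀)) := by
  rw [Set.disjoint_left]
  intro x hx hxt
  rw [mem_rightCoset_iff] at hx hxt ht
  apply ht
  have : (x * t⁻¹)⁻¹ * (x * y⁻¹) = t * y⁻¹ := by group
  exact this ▸ H.mul_mem (H.inv_mem hxt) hx

theorem exists_subset_union_op_smul_of_ncard_mul_lt [Finite H] {T : Set G₀} (hT : T.Finite)
    (h1 : 1 ∈ T) (hTH : ¬ T ⊆ H)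
    (hlt : 3 * ((H : Set G₀) * T).ncard < 3 * Nat.card H + 2 * T.ncard) :
    3 * Nat.card H < 2 * T.ncard ∧ ∃ y ∉ H, T ⊆ (H : Set G₀) ∪ op y • (H : Set G₀) := by
  obtain ⟨y, hyT, hy⟩ := Set.not_subset.1 hTH
  have hfin : ((H : Set G₀) * T).Finite := (Set.toFinite _).mul hT
  have hfin_coset (t : G₀) : (op t • (H : Set G₀)).Finite := (Set.toFinite (H : Set G₀)).smul_set
  have coset_subset {t : G₀} (ht : t ∈ T) : op t • (H : Set G₀) ⊆ H * T :=
    Set.op_smul_set_subset_mul ht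
  have hH_subset : (H : Set G₀) ⊆ H * T := Set.subset_mul_left _ h1
  have disjoint_coset {t : G₀} (ht : t ∉ H) : Disjoint (H : Set G₀) (op t • (H : Set G₀)) := by
    have := disjoint_op_smul_coe (H := H) (y := 1) (t := t) (by simpa using ht)
    rwa [MulOpposite.op_one, one_smul] at this
  have hncard : ((H : Set G₀) ∪ op y • (H : Set G₀)).ncard = 2 * Nat.card H := by
    rw [Set.ncard_union_eq (disjoint_coset hy) (Set.toFinite _) (hfin_coset y),
      Set.ncard_smul_set, ← two_mul, ← Nat.card_coe_set_eq, SetLike.coe_sort_coe]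
  have hunion := Set.union_subset hH_subset (coset_subset hyT)
  refine ⟨?_, y, hy, fun t ht ↦ ?_⟩
  · have := Set.ncard_le_ncard hunion hfin
    lia
  · by_contra h
    rw [Set.mem_union, not_or] at h
    have hthree := Set.ncard_le_ncard (Set.union_subset hunion (coset_subset ht)) hfin
    rw [Set.ncard_union_eq
      (Set.disjoint_union_left.2 ⟨disjoint_coset h.1, disjoint_op_smul_coe h.2⟩)
      ((Set.toFinite _).union (hfin_coset y)) (hfin_coset t), hncard, Set.ncard_smul_set,
      ← Nat.card_coe_set_eq, SetLike.coe_sort_coe] at hthree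
    have hT_le := Set.ncard_le_ncard (Set.subset_mul_right T H.one_mem) hfin
    lia

end TwoCosets

section Assembly

variable {G₀ : Type*} [Group G₀] [DecidableEq G₀] {A T F : Finset G₀} {H : Subgroup G₀}

theorem isSeparating_inv (h1 : 1 ∈ A)
    (hproper : (↑(A⁻¹ * A) : Set G₀) ≠ Subgroup.closure (↑(A⁻¹ * A) : Set G₀)) :
    IsSeparating (Subgroup.closure (↑(A⁻¹ * A) : Set G₀)) A A⁻¹ where
  nonempty := ⟨1, by simpa using h1⟩
  subset := (Finset.coe_subset.2 (Finset.subset_mul_left _ h1)).trans Subgroup.subset_closure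
  not_subset h := hproper (Subgroup.subset_closure.antisymm h)

theorem IsSeparating.not_subset_coe (hHF : (H : Set G₀) = F)
    (hF : IsSeparating (Subgroup.closure (↑(A⁻¹ * A) : Set G₀)) T F) (hT : T = A ∨ T = A⁻¹)
    (h1 : 1 ∈ T) : ¬ (T : Set G₀) ⊆ H := by
  intro hTH
  have hAH : (A : Set G₀) ⊆ H := by
    rcases hT with rfl | rfl
    · exact hTH
    · rwa [Finset.coe_inv, Set.inv_subset, inv_coe_set] at hTH
  have hle : Subgroup.closure (↑(A⁻¹ * A) : Set G₀) ≤ H := by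
    rw [Subgroup.closure_le, Finset.coe_mul, Finset.coe_inv]
    exact Subgroup.mul_subset (by rwa [Set.inv_subset, inv_coe_set]) hAH
  refine hF.not_subset ((SetLike.coe_subset_coe.2 hle).trans ?_)
  rw [Finset.coe_mul, hHF]
  exact Set.subset_mul_left _ h1

theorem exists_hasTripleStructure_of_one_mem (h1 : 1 ∈ A)
    (hproper : (↑(A⁻¹ * A) : Set G₀) ≠ Subgroup.closure (↑(A⁻¹ * A) : Set G₀))
    (hsmall : 3 * (A⁻¹ * A).card < 5 * A.card) :
    ∃ (H : Subgroup G₀) (z : G₀), Finite H ∧ HasTripleStructure (↑(A⁻¹ * A) : Set G₀) H z := by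
  have hAG : (A : Set G₀) ⊆ Subgroup.closure (↑(A⁻¹ * A) : Set G₀) :=
    (Finset.coe_subset.2 (Finset.subset_mul_right _ (by simpa using h1))).trans
      Subgroup.subset_closure
  obtain ⟨H, T, F, hHF, hT, hF, hle⟩ :=
    (isSeparating_inv h1 hproper).exists_subgroup ⟨1, h1⟩ hAG
  have hfin : Finite H := (hHF ▸ F.finite_toSet : (H : Set G₀).Finite)
  have h1T : 1 ∈ T := by rcases hT with rfl | rfl <;> simpa using h1
  have hTA : T.card = A.card := by rcases hT with rfl | rfl <;> simp
  have hlt : 3 * ((H : Set G₀) * (T : Set G₀)).ncard <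
      3 * Nat.card H + 2 * (T : Set G₀).ncard := by
    rw [Finset.card_inv] at hle
    rw [← SetLike.coe_sort_coe H, Nat.card_coe_set_eq, hHF, ← Finset.coe_mul,
      Set.ncard_coe_finset, Set.ncard_coe_finset, Set.ncard_coe_finset]
    lia
  obtain ⟨hcard, y, hy, hTy⟩ := exists_subset_union_op_smul_of_ncard_mul_lt T.finite_toSet h1T
    (hF.not_subset_coe hHF hT h1T) hlt
  rw [Set.ncard_coe_finset, hTA, ← Set.ncard_coe_finset] at hcard
  rw [← Set.ncard_coe_finset, ← Set.ncard_coe_finset A] at hsmall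
  rw [Finset.coe_mul, Finset.coe_inv] at hproper hsmall ⊢
  refine ⟨H, ?_⟩
  rcases hT with rfl | rfl
  · exact (exists_hasTripleStructure_of_subset_union_op_smul hy hTy hcard hsmall hproper).imp
      fun _ ↦ And.intro hfin
  · rw [Finset.coe_inv, Set.inv_subset, Set.union_inv, Set.inv_op_smul_set_distrib,
      inv_coe_set] at hTy
    exact (exists_hasTripleStructure_of_subset_union_smul (by rwa [inv_mem_iff]) hTy hcard hsmall
      hproper).imp fun _ ↦ And.intro hfin

theorem exists_hasTripleStructure (hA : A.Nonempty)
    (hproper : (↑(A⁻¹ * A) : Set G₀) ≠ Subgroup.closure (↑(A⁻¹ * A) : Set G₀))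
    (hsmall : 3 * (A⁻¹ * A).card < 5 * A.card) :
    ∃ (H : Subgroup G₀) (z : G₀), Finite H ∧ HasTripleStructure (↑(A⁻¹ * A) : Set G₀) H z := by
  obtain ⟨a, ha⟩ := hA
  have htranslate : (a⁻¹ • A)⁻¹ * (a⁻¹ • A) = A⁻¹ * A := by
    rw [Finset.inv_smul_finset_distrib, inv_inv, Finset.op_smul_finset_mul_eq_mul_smul_finset,
      smul_inv_smul]
  have h1 : 1 ∈ a⁻¹ • A := by simpa using Finset.smul_mem_smul_finset (a := a⁻¹) ha
  rw [← Finset.card_smul_finset a⁻¹ A] at hsmall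
  rw [← htranslate] at hproper hsmall ⊢
  exact exists_hasTripleStructure_of_one_mem h1 hproper hsmall

end Assembly

/-- Let `A` be a nonempty finite subset of a group `G₀` and `G` the subgroup
generated by `A⁻¹A`. Suppose `A⁻¹A` is a proper subset of `G` and
`3|A⁻¹A| < 5|A|`. Then there exist a subgroup `K` of `G`, normal in `G`, and a
subgroup `H` with `K ⊆ H ⊆ A⁻¹A`, such that `2|K| ≥ |H|`,
`(A⁻¹A)K = K(A⁻¹A) = A⁻¹A`, `|A⁻¹A| = 3|H|`, and `6|K| ≥ |A⁻¹A|`. -/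
theorem stmt_15 {G₀ : Type*} [Group G₀] [DecidableEq G₀] (A : Finset G₀)
    (hA : A.Nonempty) (G : Subgroup G₀)
    (hG : G = Subgroup.closure (↑(A⁻¹ * A) : Set G₀))
    (hproper : (↑(A⁻¹ * A) : Set G₀) ≠ (G : Set G₀))
    (hsmall : 3 * (A⁻¹ * A).card < 5 * A.card) :
    ∃ K H : Subgroup G₀, K ≤ G ∧
      (∀ g ∈ G, ∀ x ∈ K, g * x * g⁻¹ ∈ K) ∧
      K ≤ H ∧ (H : Set G₀) ⊆ (↑(A⁻¹ * A) : Set G₀) ∧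
      2 * Nat.card K ≥ Nat.card H ∧
      (↑(A⁻¹ * A) : Set G₀) * (K : Set G₀) = (↑(A⁻¹ * A) : Set G₀) ∧
      (K : Set G₀) * (↑(A⁻¹ * A) : Set G₀) = (↑(A⁻¹ * A) : Set G₀) ∧
      (A⁻¹ * A).card = 3 * Nat.card H ∧
      6 * Nat.card K ≥ (A⁻¹ * A).card := by
  subst hG
  obtain ⟨H, z, _, hD⟩ := exists_hasTripleStructure hA hproper hsmall
  have hcard : (A⁻¹ * A).card = 3 * Nat.card H := by
    rw [← Set.ncard_coe_finset, hD.ncard_eq]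
  have hinv : (↑(A⁻¹ * A) : Set G₀)⁻¹ = ↑(A⁻¹ * A) := by
    rw [← Finset.coe_inv, mul_inv_rev, inv_inv]
  have hle := hD.card_le
  refine ⟨H ⊓ MulAut.conj z • H, H, ?_, fun g hg x hx ↦ ?_, inf_le_left, hD.coe_subset, hle,
    hD.mul_inf_eq, hD.inf_mul_eq hinv, hcard, by lia⟩
  · exact inf_le_left.trans (hD.coe_subset.trans Subgroup.subset_closure)
  · exact (Subgroup.mem_normalizer_iff.1 (hD.closure_le_normalizer hg) x).1 hx
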